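/- There exists a unital ℂ-algebra homomorphism ι̂ : y_ℏ(sl(n)) → y_ℏ(gl(n)) satisfying ι̂(X^+_{i,0}) = T^{(1)}_{i,i+1}, ι̂(X^−_{i,0}) = T^{(1)}_{i+1,i}, ι̂(H_{i,0}) = T^{(1)}_{i,i} − T^{(1)}_{i+1,i+1}, ι̂(H_{i,1}) = ℋ_i + (ℏ/2)(T^{(1)}_{i,i} − T^{(1)}_{i+1,i+1})² for all 1 ≤ i ≤ n−1, and ι̂(A_{n,1}) = T^{(2)}_{n,n} − ((n−1)/2)ℏ·T^{(1)}_{n,n} + ℏ∑_{u=1}^{n−1} T^{(1)}_{n,u}T^{(1)}_{u,n} + (ℏ/2)(T^{(1)}_{n,n})². -/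

import Mathlib

open scoped BigOperators

noncomputable section

/-- Kronecker delta as a complex scalar. -/
def kd {n : ℕ} (i j : Fin n) : ℂ := if i = j then 1 else 0

/-- The free associative unital `ℂ`-algebra on generators `T^{(r)}_{i,j}`,
`r ∈ ℕ`, `1 ≤ i, j ≤ n` (indices realized as `Fin n`). -/
abbrev FAgl (n : ℕ) := FreeAlgebra ℂ (ℕ × Fin n × Fin n)

/-- The generator `T^{(r)}_{i,j}` of the free algebra. -/
def Tf (n : ℕ) (r : ℕ) (i j : Fin n) : FAgl n := FreeAlgebra.ι ℂ (r, i, j)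

/-- The defining relations of `y_ℏ(gl(n))`:  `T^{(0)}_{i,j} = δ_{i,j}`;
`[T^{(1)}_{i,j}, T^{(r)}_{k,l}] = δ_{j,k}T^{(r)}_{i,l} − δ_{i,l}T^{(r)}_{k,j}`;
`[T^{(2)}_{i,i}, T^{(2)}_{j,j}] = −ℏ(T^{(1)}_{j,i}T^{(2)}_{i,j} − T^{(2)}_{j,i}T^{(1)}_{i,j})`;
`[T^{(2)}_{i,i}, T^{(r)}_{k,l}] = δ_{i,k}T^{(r+1)}_{i,l} − δ_{i,l}T^{(r+1)}_{k,i}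
  − ℏ(T^{(1)}_{k,i}T^{(r)}_{i,l} − T^{(r)}_{k,i}T^{(1)}_{i,l})`. -/
inductive glRel (n : ℕ) (ℏ : ℂ) : FAgl n → FAgl n → Prop
  | T0 (i j : Fin n) :
      glRel n ℏ (Tf n 0 i j) (algebraMap ℂ (FAgl n) (kd i j))
  | R1 (r : ℕ) (i j k l : Fin n) :
      glRel n ℏ ⁅Tf n 1 i j, Tf n r k l⁆
        (kd j k • Tf n r i l - kd i l • Tf n r k j)
  | R2 (i j : Fin n) :
      glRel n ℏ ⁅Tf n 2 i i, Tf n 2 j j⁆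
        (-(ℏ • (Tf n 1 j i * Tf n 2 i j - Tf n 2 j i * Tf n 1 i j)))
  | R3 (r : ℕ) (i k l : Fin n) :
      glRel n ℏ ⁅Tf n 2 i i, Tf n r k l⁆
        (kd i k • Tf n (r + 1) i l - kd i l • Tf n (r + 1) k i
          - ℏ • (Tf n 1 k i * Tf n r i l - Tf n r k i * Tf n 1 i l))

/-- The algebra `y_ℏ(gl(n))`: the quotient of the free algebra by the two-sided ideal
generated by the differences of the two sides of the relations `glRel`. -/
abbrev yGL (n : ℕ) (ℏ : ℂ) := RingQuot (glRel n ℏ)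

/-- The image of `T^{(r)}_{i,j}` in `y_ℏ(gl(n))`. -/
def T (n : ℕ) (ℏ : ℂ) (r : ℕ) (i j : Fin n) : yGL n ℏ :=
  RingQuot.mkAlgHom ℂ (glRel n ℏ) (Tf n r i j)

/-- The element `ℋ_i` of `y_ℏ(gl(n))` for `1 ≤ i ≤ n−1`; here the paper's index `i`
corresponds to the 0-based index `a = i − 1` (so `a + 1 < n`), and
`ℋ_i = T^{(2)}_{i,i} − T^{(2)}_{i+1,i+1} − ((i−1)/2)ℏ(T^{(1)}_{i,i} − T^{(1)}_{i+1,i+1})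
 + ℏ∑_{u=1}^{i−1} T^{(1)}_{i,u}T^{(1)}_{u,i} − ℏ∑_{u=1}^{i} T^{(1)}_{i+1,u}T^{(1)}_{u,i+1}
 + (ℏ/2)((T^{(1)}_{i,i})² − (T^{(1)}_{i+1,i+1})²)`. -/
def HH (n : ℕ) (ℏ : ℂ) (a : ℕ) (h : a + 1 < n) : yGL n ℏ :=
  T n ℏ 2 ⟨a, by omega⟩ ⟨a, by omega⟩ - T n ℏ 2 ⟨a + 1, h⟩ ⟨a + 1, h⟩
    - (((a : ℂ) / 2) * ℏ) • (T n ℏ 1 ⟨a, by omega⟩ ⟨a, by omega⟩ - T n ℏ 1 ⟨a + 1, h⟩ ⟨a + 1, h⟩)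
    + ℏ • (∑ u : Fin a,
        T n ℏ 1 ⟨a, by omega⟩ ⟨u.val, by have := u.isLt; omega⟩ *
          T n ℏ 1 ⟨u.val, by have := u.isLt; omega⟩ ⟨a, by omega⟩)
    - ℏ • (∑ u : Fin (a + 1),
        T n ℏ 1 ⟨a + 1, h⟩ ⟨u.val, by have := u.isLt; omega⟩ *
          T n ℏ 1 ⟨u.val, by have := u.isLt; omega⟩ ⟨a + 1, h⟩)
    + (ℏ / 2) • ((T n ℏ 1 ⟨a, by omega⟩ ⟨a, by omega⟩) ^ 2
        - (T n ℏ 1 ⟨a + 1, h⟩ ⟨a + 1, h⟩) ^ 2)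

/-- Generators of the extended algebra `y_ℏ(sl(n))`: `X^+_{i,r}`, `X^−_{i,r}`, `H_{i,r}`
for `1 ≤ i ≤ n−1` (realized as `Fin (n−1)`), `r ∈ {0,1}` (realized as `Fin 2`),
together with one additional generator `A_{n,1}`. -/
inductive SLAgen (n : ℕ) : Type
  | Xp : Fin (n - 1) → Fin 2 → SLAgen n
  | Xm : Fin (n - 1) → Fin 2 → SLAgen n
  | H : Fin (n - 1) → Fin 2 → SLAgen n
  | A : SLAgen n

/-- The free associative unital `ℂ`-algebra on the generators. -/
abbrev FAsla (n : ℕ) := FreeAlgebra ℂ (SLAgen n)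

/-- Kronecker delta on `Fin (n-1)` as a complex scalar. -/
def kdsl {n : ℕ} (i j : Fin (n - 1)) : ℂ := if i = j then 1 else 0

/-- `X^±_{i,r}` in the free algebra; `b = true` is `+`, `b = false` is `−`. -/
def Xf (n : ℕ) (b : Bool) (i : Fin (n - 1)) (r : Fin 2) : FAsla n :=
  FreeAlgebra.ι ℂ (if b then SLAgen.Xp i r else SLAgen.Xm i r)

/-- `H_{i,r}` in the free algebra. -/
def Hf (n : ℕ) (i : Fin (n - 1)) (r : Fin 2) : FAsla n := FreeAlgebra.ι ℂ (SLAgen.H i r)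

/-- `A_{n,1}` in the free algebra. -/
def Af (n : ℕ) : FAsla n := FreeAlgebra.ι ℂ SLAgen.A

/-- The sign `±1` associated with `b : Bool`. -/
def sgn (b : Bool) : ℂ := if b then 1 else -1

/-- The Cartan matrix of `sl(n)`: `a_{i,i} = 2`, `a_{i,j} = −1` if `|i−j| = 1`,
`a_{i,j} = 0` otherwise. -/
def cartan {n : ℕ} (i j : Fin (n - 1)) : ℂ :=
  if i = j then 2 else if i.val + 1 = j.val ∨ j.val + 1 = i.val then -1 else 0

/-- `1 + |a_{i,j}|` as a natural number. -/
def serrePow {n : ℕ} (i j : Fin (n - 1)) : ℕ :=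
  if i = j then 3 else if i.val + 1 = j.val ∨ j.val + 1 = i.val then 2 else 1

/-- `H̃_{i,1} = H_{i,1} − (ℏ/2)H_{i,0}²` in the free algebra. -/
def Htf (n : ℕ) (ℏ : ℂ) (i : Fin (n - 1)) : FAsla n :=
  Hf n i 1 - (ℏ / 2) • (Hf n i 0) ^ 2

/-- Iterated adjoint action: `adn k x y = (ad x)^k (y)` with `ad x y = [x, y]`. -/
def adn {A : Type*} [Ring A] : ℕ → A → A → A
  | 0, _, y => y
  | k + 1, x, y => ⁅x, adn k x y⁆

/-- The defining relations of the extended algebra `y_ℏ(sl(n))`: the minimalistic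
relations of `Y_ℏ(sl(n))` together with `[H̃_{n−1,1}, A_{n,1}] = 0` and
`[A_{n,1}, X^±_{n−1,0}] = ∓X^±_{n−1,1}`. -/
inductive slaRel (n : ℕ) (ℏ : ℂ) : FAsla n → FAsla n → Prop
  | HHrel (i j : Fin (n - 1)) (r s : Fin 2) : slaRel n ℏ ⁅Hf n i r, Hf n j s⁆ 0
  | XpXm00 (i j : Fin (n - 1)) :
      slaRel n ℏ ⁅Xf n true i 0, Xf n false j 0⁆ (kdsl i j • Hf n i 0)
  | XpXm10 (i j : Fin (n - 1)) :
      slaRel n ℏ ⁅Xf n true i 1, Xf n false j 0⁆ (kdsl i j • Hf n i 1)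
  | XpXm01 (i j : Fin (n - 1)) :
      slaRel n ℏ ⁅Xf n true i 0, Xf n false j 1⁆ (kdsl i j • Hf n i 1)
  | H0X (b : Bool) (i j : Fin (n - 1)) (r : Fin 2) :
      slaRel n ℏ ⁅Hf n i 0, Xf n b j r⁆ ((sgn b * cartan i j) • Xf n b j r)
  | HtX (b : Bool) (i j : Fin (n - 1)) :
      slaRel n ℏ ⁅Htf n ℏ i, Xf n b j 0⁆ ((sgn b * cartan i j) • Xf n b j 1)
  | XX (b : Bool) (i j : Fin (n - 1)) :
      slaRel n ℏ (⁅Xf n b i 1, Xf n b j 0⁆ - ⁅Xf n b i 0, Xf n b j 1⁆)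
        ((sgn b * cartan i j * (ℏ / 2)) •
          (Xf n b i 0 * Xf n b j 0 + Xf n b j 0 * Xf n b i 0))
  | serre (b : Bool) (i j : Fin (n - 1)) (hij : i ≠ j) :
      slaRel n ℏ (adn (serrePow i j) (Xf n b i 0) (Xf n b j 0)) 0
  | HtA (h : n - 2 < n - 1) : slaRel n ℏ ⁅Htf n ℏ ⟨n - 2, h⟩, Af n⁆ 0
  | AX (b : Bool) (h : n - 2 < n - 1) :
      slaRel n ℏ ⁅Af n, Xf n b ⟨n - 2, h⟩ 0⁆ (-(sgn b) • Xf n b ⟨n - 2, h⟩ 1)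

/-- The extended algebra `y_ℏ(sl(n))`: the quotient of the free algebra by the
two-sided ideal generated by the differences of the two sides of `slaRel`. -/
abbrev YSLA (n : ℕ) (ℏ : ℂ) := RingQuot (slaRel n ℏ)

/-- The image of an element of the free algebra in `y_ℏ(sl(n))`. -/
def slamk (n : ℕ) (ℏ : ℂ) (x : FAsla n) : YSLA n ℏ := RingQuot.mkAlgHom ℂ (slaRel n ℏ) x

/-- The element `T^{(2)}_{n,n} − ((n−1)/2)ℏ·T^{(1)}_{n,n}
 + ℏ∑_{u=1}^{n−1} T^{(1)}_{n,u}T^{(1)}_{u,n} + (ℏ/2)(T^{(1)}_{n,n})²` of `y_ℏ(gl(n))`. -/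
def Agl (n : ℕ) (ℏ : ℂ) (hn : 3 ≤ n) : yGL n ℏ :=
  T n ℏ 2 ⟨n - 1, by omega⟩ ⟨n - 1, by omega⟩
    - ((((n : ℂ) - 1) / 2) * ℏ) • T n ℏ 1 ⟨n - 1, by omega⟩ ⟨n - 1, by omega⟩
    + ℏ • (∑ u : Fin (n - 1),
        T n ℏ 1 ⟨n - 1, by omega⟩ ⟨u.val, by have := u.isLt; omega⟩ *
          T n ℏ 1 ⟨u.val, by have := u.isLt; omega⟩ ⟨n - 1, by omega⟩)
    + (ℏ / 2) • (T n ℏ 1 ⟨n - 1, by omega⟩ ⟨n - 1, by omega⟩) ^ 2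

/-!
Write `E = T⁽¹⁾` and `F = T⁽²⁾`. Up to multiples of `E_{i,i}`, the elements `H̃_{i,1}` and `A_{n,1}`
go to differences of, respectively single, elements
`F_{i,i} + ℏ ∑_{u < i} E_{i,u} E_{u,i} + (ℏ/2) E_{i,i}²`. The element with index `j` commutes with
`E_{k,l}` for `k, l < j` and with `F_{i,i}` for `i < j`, hence with all those of smaller index.
The remaining relations for positive root vectors reduce to the bracket of the truncated sums
`F_{i,j} + ℏ ∑_{u < m} E_{i,u} E_{u,j}` with `E_{k,l}`. Those for negative root vectors follow by
passing to the transposed families in the opposite algebra, which satisfy the same relations.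
-/

section Commutators

section NonUnitalRing

variable {A : Type*} [NonUnitalRing A]

theorem mul_lie_eq_add (x y z : A) : ⁅x * y, z⁆ = ⁅x, z⁆ * y + x * ⁅y, z⁆ := by
  simp only [Ring.lie_def, sub_mul, mul_sub, mul_assoc]
  abel

theorem lie_mul_eq_add (x y z : A) : ⁅x, y * z⁆ = ⁅x, y⁆ * z + y * ⁅x, z⁆ := by
  simp only [Ring.lie_def, sub_mul, mul_sub, mul_assoc]
  abel

theorem mul_eq_mul_add_lie (x y : A) : x * y = y * x + ⁅x, y⁆ := by
  rw [Ring.lie_def, add_sub_cancel]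

theorem unop_lie (x y : Aᵐᵒᵖ) : ⁅x, y⁆.unop = ⁅y.unop, x.unop⁆ := rfl

end NonUnitalRing

variable {A A' Φ : Type*} [Ring A] [Ring A'] [FunLike Φ A A'] [RingHomClass Φ A A']

theorem map_ring_lie (f : Φ) (x y : A) : f ⁅x, y⁆ = ⁅f x, f y⁆ := by
  simp only [Ring.lie_def, map_sub, map_mul]

theorem map_adn (f : Φ) (k : ℕ) (x y : A) : f (adn k x y) = adn k (f x) (f y) := by
  induction k with
  | zero => rfl
  | succ k ih => rw [adn, adn, map_ring_lie, ih]

end Commutators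

section Kronecker

variable {n : ℕ}

@[simp]
theorem kd_self (i : Fin n) : kd i i = 1 := if_pos rfl

theorem kd_of_ne {i j : Fin n} (h : i ≠ j) : kd i j = 0 := if_neg h

theorem kd_comm (i j : Fin n) : kd i j = kd j i := by simp only [kd, eq_comm]

theorem kd_smul_eq {M : Type*} [AddCommMonoid M] [Module ℂ M] (f : Fin n → M) (i j : Fin n) :
    kd i j • f i = kd i j • f j := by
  by_cases h : i = j
  · rw [h]
  · rw [kd_of_ne h, zero_smul, zero_smul]

theorem sum_kd_smul {M : Type*} [AddCommMonoid M] [Module ℂ M] (s : Finset (Fin n)) (k : Fin n)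
    (f : Fin n → M) : ∑ u ∈ s, kd u k • f u = if k ∈ s then f k else 0 := by
  simp only [kd, ite_smul, one_smul, zero_smul, Finset.sum_ite_eq']

end Kronecker

section SimpleRoots

variable {n : ℕ}

/-- The row of the raising operator of the `i`-th simple root: with indices starting at `0`, that
root vector is the matrix unit in position `(lo i, hi i)`. -/
def lo (i : Fin (n - 1)) : Fin n := ⟨i, by omega⟩

/-- The column of the raising operator of the `i`-th simple root; see `lo`. -/
def hi (i : Fin (n - 1)) : Fin n := ⟨i + 1, by omega⟩

theorem lo_ne_hi (i : Fin (n - 1)) : lo i ≠ hi i := by simp [lo, hi]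

theorem lo_lt_hi (i : Fin (n - 1)) : lo i < hi i := by simp [lo, hi]

theorem kd_lo_lo (i j : Fin (n - 1)) : kd (lo i) (lo j) = kdsl i j := by
  simp only [kd, kdsl, lo, Fin.ext_iff]

theorem kd_hi_hi (i j : Fin (n - 1)) : kd (hi i) (hi j) = kdsl i j := by
  simp only [kd, kdsl, hi, Fin.ext_iff, Nat.add_right_cancel_iff]

theorem kd_lo_hi_self (i : Fin (n - 1)) : kd (lo i) (hi i) = 0 := kd_of_ne (lo_ne_hi i)

theorem kd_hi_lo_self (i : Fin (n - 1)) : kd (hi i) (lo i) = 0 := kd_of_ne (lo_ne_hi i).symm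

theorem cartan_eq_kd (i j : Fin (n - 1)) :
    cartan i j = kd (lo i) (lo j) - kd (lo i) (hi j) - kd (hi i) (lo j) + kd (hi i) (hi j) := by
  simp only [cartan, kd, lo, hi, Fin.ext_iff]
  split_ifs <;> first | omega | norm_num

theorem cartan_mul_sub (i j : Fin (n - 1)) :
    cartan i j * ((j : ℂ) - i) = kd (lo i) (hi j) - kd (hi i) (lo j) := by
  rcases eq_or_ne i j with rfl | hij
  · rw [kd_lo_hi_self, kd_hi_lo_self, sub_self, mul_zero, sub_self]
  have hval : (i : ℕ) ≠ j := Fin.val_ne_of_ne hij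
  simp only [cartan, kd, lo, hi, Fin.ext_iff, if_neg hval]
  by_cases hsucc : (i : ℕ) + 1 = j
  · simp [← hsucc, add_assoc]
  by_cases hpred : (j : ℕ) + 1 = i
  · simp [← hpred, add_assoc]
  simp [hsucc, hpred, Ne.symm hpred]

theorem indicator_lo_sub_indicator_hi (i j : Fin (n - 1)) :
    (if lo j < hi i then (1 : ℂ) else 0) - (if hi j < hi i then 1 else 0) = kdsl i j := by
  simp only [kdsl, lo, hi, Fin.lt_def, Fin.ext_iff]
  split_ifs <;> first | omega | norm_num

/-- The image of `X^±_{i,0}`, with `b = true` for `+`. -/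
def rootVec {B : Type*} (E : Fin n → Fin n → B) (b : Bool) (i : Fin (n - 1)) : B :=
  if b then E (lo i) (hi i) else E (hi i) (lo i)

theorem rootVec_true {B : Type*} (E : Fin n → Fin n → B) (i : Fin (n - 1)) :
    rootVec E true i = E (lo i) (hi i) := rfl

theorem rootVec_false {B : Type*} (E : Fin n → Fin n → B) (i : Fin (n - 1)) :
    rootVec E false i = E (hi i) (lo i) := rfl

end SimpleRoots

section YangianPair

attribute [local instance] LieRing.ofAssociativeRing

variable {n : ℕ} {B : Type*} [Ring B] [Algebra ℂ B]

/-- The family `E` satisfies the commutation relations of the matrix units of `gl(n)`. -/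
def IsGLFamily (E : Fin n → Fin n → B) : Prop :=
  ∀ i j k l, ⁅E i j, E k l⁆ = kd j k • E i l - kd i l • E k j

/-- The part of the relations between `E = T⁽¹⁾` and `F = T⁽²⁾` in `y_ℏ(gl(n))` which determines
homomorphisms out of `y_ℏ(sl(n))`. -/
structure IsYangianPair (E F : Fin n → Fin n → B) (ℏ : ℂ) : Prop where
  lie_E_E : IsGLFamily E
  lie_E_F : ∀ i j k l, ⁅E i j, F k l⁆ = kd j k • F i l - kd i l • F k j
  lie_F_F : ∀ i j, ⁅F i i, F j j⁆ = -(ℏ • (E j i * F i j - F j i * E i j))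

/-- `F_{i,j} + ℏ ∑_{u < m} E_{i,u} E_{u,j}`. As long as `k` and `l` lie on the same side of the
cut-off `m`, bracketing with `E_{k,l}` treats it like a matrix unit. -/
def truncF (E F : Fin n → Fin n → B) (ℏ : ℂ) (m i j : Fin n) : B :=
  F i j + ℏ • ∑ u ∈ Finset.Iio m, E i u * E u j

/-- `F_{i,i} + ℏ ∑_{u < i} E_{i,u} E_{u,i} + (ℏ/2) E_{i,i}²`. These pairwise commuting elements
are the diagonal part of the images of `H_{i,1}` and `A_{n,1}`. -/
def diagF (E F : Fin n → Fin n → B) (ℏ : ℂ) (i : Fin n) : B :=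
  truncF E F ℏ i i i + (ℏ / 2) • E i i ^ 2

/-- The image of `A_{n,1}`, when `m` is the last index. -/
def shiftedDiagF (E F : Fin n → Fin n → B) (ℏ : ℂ) (m : Fin n) : B :=
  diagF E F ℏ m - ((m : ℂ) / 2 * ℏ) • E m m

/-- The image of `H_{i,0}`. -/
def coroot (E : Fin n → Fin n → B) (i : Fin (n - 1)) : B := E (lo i) (lo i) - E (hi i) (hi i)

/-- The image of `H̃_{i,1} = H_{i,1} - (ℏ/2) H_{i,0}²`. -/
def corootOne (E F : Fin n → Fin n → B) (ℏ : ℂ) (i : Fin (n - 1)) : B :=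
  diagF E F ℏ (lo i) - diagF E F ℏ (hi i) - ((i : ℂ) / 2 * ℏ) • coroot E i

/-- The image of `X^±_{i,1}`, with `b = true` for `+`. -/
def rootVecOne (E F : Fin n → Fin n → B) (ℏ : ℂ) (b : Bool) (i : Fin (n - 1)) : B :=
  rootVec (truncF E F ℏ (hi i)) b i - ((i : ℂ) / 2 * ℏ) • rootVec E b i

variable {E F : Fin n → Fin n → B} {ℏ : ℂ}

theorem truncF_hi (i : Fin (n - 1)) (k l : Fin n) :
    truncF E F ℏ (hi i) k l = truncF E F ℏ (lo i) k l + ℏ • (E k (lo i) * E (lo i) l) := by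
  have hIio : Finset.Iio (hi i) = insert (lo i) (Finset.Iio (lo i)) := by
    ext u; simp only [Finset.mem_Iio, Finset.mem_insert, Fin.lt_def, Fin.ext_iff, lo, hi]; omega
  rw [truncF, truncF, hIio, Finset.sum_insert Finset.notMem_Iio_self, smul_add]
  abel

theorem kd_smul_truncF_hi (i j : Fin (n - 1)) :
    kd (hi i) (lo j) • truncF E F ℏ (hi j) (lo i) (hi j) =
      kd (hi i) (lo j) • (truncF E F ℏ (hi i) (lo i) (hi j) +
        ℏ • (rootVec E true i * rootVec E true j)) := by
  by_cases h : hi i = lo j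
  · rw [truncF_hi, h, rootVec_true, rootVec_true, h]
  · rw [kd_of_ne h, zero_smul, zero_smul]

namespace IsGLFamily

theorem diag_lie (hE : IsGLFamily E) (k i j : Fin n) :
    ⁅E k k, E i j⁆ = (kd k i - kd k j) • E i j := by
  rw [hE, kd_smul_eq (E · j) k i, kd_smul_eq (E i) k j, sub_smul]

theorem commute_diag (hE : IsGLFamily E) (k l : Fin n) : Commute (E k k) (E l l) := by
  rw [commute_iff_lie_eq, hE.diag_lie, sub_self, zero_smul]

theorem sum_mul_lie (hE : IsGLFamily E) (s : Finset (Fin n)) (i j k l : Fin n) :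
    ⁅∑ u ∈ s, E i u * E u j, E k l⁆ =
      kd j k • ∑ u ∈ s, E i u * E u l - kd i l • ∑ u ∈ s, E k u * E u j +
        ((if k ∈ s then (1 : ℂ) else 0) - (if l ∈ s then 1 else 0)) • (E i l * E k j) := by
  have hterm (u : Fin n) : ⁅E i u * E u j, E k l⁆ =
      kd j k • (E i u * E u l) - kd i l • (E k u * E u j) +
        (kd u k • (E i l * E u j) - kd u l • (E i u * E k j)) := by
    rw [mul_lie_eq_add, hE, hE]
    simp only [sub_mul, mul_sub, smul_mul_assoc, mul_smul_comm]
    abel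
  rw [sum_lie]
  simp only [hterm, Finset.sum_add_distrib, Finset.sum_sub_distrib, ← Finset.smul_sum]
  rw [sum_kd_smul s k fun u ↦ E i l * E u j, sum_kd_smul s l fun u ↦ E i u * E k j, sub_smul,
    ite_smul, ite_smul, one_smul, zero_smul]

theorem lie_lie_eq_zero (hE : IsGLFamily E) {i j k l : Fin n} (hij : i ≠ j)
    (hkl : j ≠ k ∨ i ≠ l) : ⁅E i j, ⁅E i j, E k l⁆⁆ = 0 := by
  rw [hE i j k l, lie_sub, lie_smul, lie_smul, hE, hE, kd_of_ne hij, kd_of_ne hij.symm]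
  rcases hkl with h | h <;> simp [kd_of_ne h]

end IsGLFamily

namespace IsYangianPair

theorem lie_F_E (g : IsYangianPair E F ℏ) (i j k l : Fin n) :
    ⁅F i j, E k l⁆ = kd j k • F i l - kd i l • F k j := by
  rw [← lie_skew, g.lie_E_F, kd_comm l i, kd_comm k j, neg_sub]

theorem truncF_lie (g : IsYangianPair E F ℏ) (m i j k l : Fin n) :
    ⁅truncF E F ℏ m i j, E k l⁆ =
      kd j k • truncF E F ℏ m i l - kd i l • truncF E F ℏ m k j +
        (ℏ * ((if k < m then 1 else 0) - (if l < m then 1 else 0))) • (E i l * E k j) := by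
  simp only [truncF, add_lie, smul_lie, g.lie_F_E, g.lie_E_E.sum_mul_lie, Finset.mem_Iio]
  module

theorem diag_lie_truncF (g : IsYangianPair E F ℏ) (m k i j : Fin n) :
    ⁅E k k, truncF E F ℏ m i j⁆ = (kd k i - kd k j) • truncF E F ℏ m i j := by
  rw [← lie_skew, g.truncF_lie, sub_self, mul_zero, zero_smul, add_zero, neg_sub,
    kd_comm i k, kd_comm j k, kd_smul_eq (truncF E F ℏ m · j) k i,
    kd_smul_eq (truncF E F ℏ m i) k j, sub_smul]

theorem commute_diag_diagF (g : IsYangianPair E F ℏ) (k i : Fin n) :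
    Commute (E k k) (diagF E F ℏ i) := by
  refine .add_right ?_ (((g.lie_E_E.commute_diag k i).pow_right 2).smul_right _)
  rw [commute_iff_lie_eq, g.diag_lie_truncF, sub_self, zero_smul]

theorem diagF_lie (g : IsYangianPair E F ℏ) (i k l : Fin n) :
    ⁅diagF E F ℏ i, E k l⁆ =
      kd i k • truncF E F ℏ i i l - kd i l • truncF E F ℏ i k i +
        (ℏ * ((if k < i then 1 else 0) - (if l < i then 1 else 0))) • (E i l * E k i) +
        (ℏ / 2 * (kd i k - kd i l)) • (E i i * E k l + E k l * E i i) := by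
  rw [diagF, add_lie, g.truncF_lie, smul_lie, sq, mul_lie_eq_add, g.lie_E_E.diag_lie,
    smul_mul_assoc, mul_smul_comm]
  module

theorem commute_diagF_of_lt (g : IsYangianPair E F ℏ) {j k l : Fin n} (hk : k < j) (hl : l < j) :
    Commute (diagF E F ℏ j) (E k l) := by
  rw [commute_iff_lie_eq, g.diagF_lie, kd_of_ne hk.ne', kd_of_ne hl.ne', if_pos hk, if_pos hl]
  simp

theorem commute_F_diagF_of_lt (g : IsYangianPair E F ℏ) {i j : Fin n} (hij : i < j) :
    Commute (F i i) (diagF E F ℏ j) := by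
  have hterm (u : Fin n) :
      ⁅F i i, E j u * E u j⁆ = kd u i • (E j i * F i j - F j i * E i j) := by
    rw [lie_mul_eq_add, g.lie_F_E, g.lie_F_E, kd_of_ne hij.ne, kd_comm u i]
    by_cases hu : u = i
    · simp only [hu, kd_self, zero_smul, one_smul, zero_sub, sub_zero, neg_mul]
      abel
    · simp [kd_of_ne (Ne.symm hu)]
  have hsq : ⁅F i i, E j j ^ 2⁆ = 0 := by
    rw [sq, lie_mul_eq_add, g.lie_F_E, kd_of_ne hij.ne]; simp
  rw [commute_iff_lie_eq, diagF, truncF, lie_add, lie_add, lie_smul, lie_smul, lie_sum, hsq,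
    g.lie_F_F]
  simp only [hterm, sum_kd_smul, Finset.mem_Iio, if_pos hij]
  simp

theorem commute_diagF (g : IsYangianPair E F ℏ) (i j : Fin n) :
    Commute (diagF E F ℏ i) (diagF E F ℏ j) := by
  have of_lt {i j : Fin n} (hij : i < j) : Commute (diagF E F ℏ j) (diagF E F ℏ i) := by
    have hsum : Commute (diagF E F ℏ j) (∑ u ∈ Finset.Iio i, E i u * E u i) :=
      .sum_right _ _ _ fun u hu ↦
        have huj : u < j := (Finset.mem_Iio.mp hu).trans hij
        (g.commute_diagF_of_lt hij huj).mul_right (g.commute_diagF_of_lt huj hij)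
    exact ((g.commute_F_diagF_of_lt hij).symm.add_right (hsum.smul_right ℏ)).add_right
      (((g.commute_diagF_of_lt hij hij).pow_right 2).smul_right (ℏ / 2))
  rcases lt_trichotomy i j with h | rfl | h
  · exact (of_lt h).symm
  · exact .refl _
  · exact of_lt h

theorem diagF_lie_rootVec_true (g : IsYangianPair E F ℏ) (k : Fin n) (j : Fin (n - 1)) :
    ⁅diagF E F ℏ k, rootVec E true j⁆ =
      (kd k (lo j) - kd k (hi j)) • rootVec (truncF E F ℏ (hi j)) true j -
        (ℏ / 2 * (kd k (lo j) + kd k (hi j))) • rootVec E true j := by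
  simp only [rootVec_true]
  rw [g.diagF_lie]
  by_cases hlo : k = lo j
  · have hswap : E (lo j) (hi j) * E (lo j) (lo j) =
        E (lo j) (lo j) * E (lo j) (hi j) - E (lo j) (hi j) := by
      rw [mul_eq_mul_add_lie, ← lie_skew, g.lie_E_E.diag_lie, kd_self, kd_lo_hi_self]
      module
    rw [hlo, hswap, truncF_hi, kd_self, kd_lo_hi_self, if_neg (lo_lt_hi j).not_gt,
      if_neg (lt_irrefl _)]
    module
  by_cases hhi : k = hi j
  · have hswap : E (hi j) (hi j) * E (lo j) (hi j) =
        E (lo j) (hi j) * E (hi j) (hi j) - E (lo j) (hi j) := by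
      rw [mul_eq_mul_add_lie, g.lie_E_E.diag_lie, kd_self, kd_hi_lo_self]
      module
    rw [hhi, hswap, kd_self, kd_hi_lo_self, if_pos (lo_lt_hi j), if_neg (lt_irrefl _)]
    module
  have hlt : lo j < k ↔ hi j < k := by
    simp only [lo, hi, Fin.lt_def, Fin.ext_iff] at hlo hhi ⊢
    omega
  simp [kd_of_ne hlo, kd_of_ne hhi, hlt]

end IsYangianPair

theorem coroot_lie_rootVec {G : Fin n → Fin n → B}
    (hG : ∀ k i j, ⁅E k k, G i j⁆ = (kd k i - kd k j) • G i j) (b : Bool) (i j : Fin (n - 1)) :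
    ⁅coroot E i, rootVec G b j⁆ = (sgn b * cartan i j) • rootVec G b j := by
  rw [coroot, sub_lie, cartan_eq_kd]
  cases b
  · rw [rootVec_false, hG, hG, sgn, if_neg Bool.false_ne_true]
    module
  · rw [rootVec_true, hG, hG, sgn, if_pos rfl]
    module

namespace IsGLFamily

theorem commute_coroot (hE : IsGLFamily E) (i j : Fin (n - 1)) :
    Commute (coroot E i) (coroot E j) :=
  .sub_left (.sub_right (hE.commute_diag _ _) (hE.commute_diag _ _))
    (.sub_right (hE.commute_diag _ _) (hE.commute_diag _ _))

theorem rootVec_true_lie_rootVec_false (hE : IsGLFamily E) (i j : Fin (n - 1)) :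
    ⁅rootVec E true i, rootVec E false j⁆ = kdsl i j • coroot E i := by
  rw [rootVec_true, rootVec_false, hE, kd_hi_hi, kd_lo_lo, ← smul_sub]
  by_cases hij : i = j
  · rw [hij, coroot]
  · rw [kdsl, if_neg hij, zero_smul, zero_smul]

theorem sub_smul_rootVec_lie (hE : IsGLFamily E) (i j : Fin (n - 1)) :
    ((j : ℂ) - i) • ⁅rootVec E true i, rootVec E true j⁆ =
      (kd (hi i) (lo j) - kd (lo i) (hi j)) • ⁅rootVec E true i, rootVec E true j⁆ := by
  by_cases hadj : (i : ℕ) + 1 = j ∨ (j : ℕ) + 1 = i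
  · have hcartan : cartan i j = -1 := by
      rw [cartan, if_neg (by rintro rfl; omega), if_pos hadj]
    have hdiff := cartan_mul_sub i j
    rw [hcartan] at hdiff
    congr 1
    linear_combination -hdiff
  · rw [rootVec_true, rootVec_true, hE, kd_of_ne, kd_of_ne]
    · simp
    · exact fun h ↦ hadj (.inr (Fin.ext_iff.mp h).symm)
    · exact fun h ↦ hadj (.inl (Fin.ext_iff.mp h))

theorem adn_serrePow_rootVec (hE : IsGLFamily E) (b : Bool) {i j : Fin (n - 1)} (hij : i ≠ j) :
    adn (serrePow i j) (rootVec E b i) (rootVec E b j) = 0 := by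
  by_cases hadj : (i : ℕ) + 1 = j ∨ (j : ℕ) + 1 = i
  · have hne : hi i ≠ lo j ∨ lo i ≠ hi j := by
      simp only [lo, hi, ne_eq, Fin.ext_iff]
      omega
    rw [serrePow, if_neg hij, if_pos hadj]
    cases b
    · exact hE.lie_lie_eq_zero (lo_ne_hi i).symm hne.symm
    · exact hE.lie_lie_eq_zero (lo_ne_hi i) hne
  · have hhl : kd (hi i) (lo j) = 0 := kd_of_ne fun h ↦ hadj (.inl (Fin.ext_iff.mp h))
    have hlh : kd (lo i) (hi j) = 0 := kd_of_ne fun h ↦ hadj (.inr (Fin.ext_iff.mp h).symm)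
    rw [serrePow, if_neg hij, if_neg hadj, adn, adn]
    cases b
    · rw [rootVec_false, rootVec_false, hE, hhl, hlh, zero_smul, zero_smul, sub_zero]
    · rw [rootVec_true, rootVec_true, hE, hhl, hlh, zero_smul, zero_smul, sub_zero]

end IsGLFamily

namespace IsYangianPair

theorem commute_coroot_corootOne (g : IsYangianPair E F ℏ) (i j : Fin (n - 1)) :
    Commute (coroot E i) (corootOne E F ℏ j) := by
  have hdiag (k : Fin n) : Commute (coroot E i) (diagF E F ℏ k) :=
    (g.commute_diag_diagF _ k).sub_left (g.commute_diag_diagF _ k)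
  exact ((hdiag _).sub_right (hdiag _)).sub_right ((g.lie_E_E.commute_coroot i j).smul_right _)

theorem commute_corootOne_diagF (g : IsYangianPair E F ℏ) (i : Fin (n - 1)) (k : Fin n) :
    Commute (corootOne E F ℏ i) (diagF E F ℏ k) := by
  refine .sub_left (.sub_left (g.commute_diagF _ k) (g.commute_diagF _ k)) (.smul_left ?_ _)
  exact .sub_left (g.commute_diag_diagF _ k) (g.commute_diag_diagF _ k)

theorem commute_corootOne (g : IsYangianPair E F ℏ) (i j : Fin (n - 1)) :
    Commute (corootOne E F ℏ i) (corootOne E F ℏ j) :=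
  .sub_right (.sub_right (g.commute_corootOne_diagF i _) (g.commute_corootOne_diagF i _))
    ((g.commute_coroot_corootOne j i).symm.smul_right _)

theorem commute_corootOne_shiftedDiagF (g : IsYangianPair E F ℏ) (i : Fin (n - 1)) (k : Fin n) :
    Commute (corootOne E F ℏ i) (shiftedDiagF E F ℏ k) := by
  have hdiag (l : Fin n) : Commute (diagF E F ℏ l) (E k k) := (g.commute_diag_diagF k l).symm
  have hcoroot : Commute (coroot E i) (E k k) :=
    (g.lie_E_E.commute_diag _ k).sub_left (g.lie_E_E.commute_diag _ k)
  exact (g.commute_corootOne_diagF i k).sub_right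
    ((((hdiag _).sub_left (hdiag _)).sub_left (hcoroot.smul_left _)).smul_right _)

theorem coroot_lie_rootVecOne (g : IsYangianPair E F ℏ) (b : Bool) (i j : Fin (n - 1)) :
    ⁅coroot E i, rootVecOne E F ℏ b j⁆ = (sgn b * cartan i j) • rootVecOne E F ℏ b j := by
  rw [rootVecOne, lie_sub, lie_smul, coroot_lie_rootVec (g.diag_lie_truncF (hi j)),
    coroot_lie_rootVec g.lie_E_E.diag_lie]
  module

theorem corootOne_lie_rootVec_true (g : IsYangianPair E F ℏ) (i j : Fin (n - 1)) :
    ⁅corootOne E F ℏ i, rootVec E true j⁆ = cartan i j • rootVecOne E F ℏ true j := by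
  have hcoroot := coroot_lie_rootVec g.lie_E_E.diag_lie true i j
  rw [sgn, if_pos rfl, one_mul] at hcoroot
  rw [corootOne, sub_lie, sub_lie, smul_lie, hcoroot, g.diagF_lie_rootVec_true,
    g.diagF_lie_rootVec_true, rootVecOne]
  match_scalars
  · rw [cartan_eq_kd]
    ring
  · rw [kd_lo_lo, kd_hi_hi]
    linear_combination (ℏ / 2) * cartan_mul_sub i j

theorem shiftedDiagF_lie_rootVec_true (g : IsYangianPair E F ℏ) (i : Fin (n - 1)) :
    ⁅shiftedDiagF E F ℏ (hi i), rootVec E true i⁆ = -rootVecOne E F ℏ true i := by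
  have hcast : ((hi i : ℕ) : ℂ) = i + 1 := by simp [hi]
  rw [shiftedDiagF, sub_lie, smul_lie, g.diagF_lie_rootVec_true, rootVecOne, rootVec_true,
    rootVec_true, g.lie_E_E.diag_lie, kd_self, kd_hi_lo_self, hcast]
  module

theorem truncF_lo_lo_sub_truncF_hi_hi (g : IsYangianPair E F ℏ) (i : Fin (n - 1)) :
    truncF E F ℏ (hi i) (lo i) (lo i) - truncF E F ℏ (hi i) (hi i) (hi i) -
        ℏ • (E (lo i) (lo i) * E (hi i) (hi i)) =
      diagF E F ℏ (lo i) - diagF E F ℏ (hi i) + (ℏ / 2) • coroot E i ^ 2 := by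
  have hcomm : E (hi i) (hi i) * E (lo i) (lo i) = E (lo i) (lo i) * E (hi i) (hi i) :=
    g.lie_E_E.commute_diag _ _
  rw [truncF_hi, truncF_hi, diagF, diagF, truncF_hi, coroot]
  simp only [sq, sub_mul, mul_sub, hcomm]
  module

theorem rootVecOne_true_lie_rootVec_false (g : IsYangianPair E F ℏ) (i j : Fin (n - 1)) :
    ⁅rootVecOne E F ℏ true i, rootVec E false j⁆ =
      kdsl i j • (corootOne E F ℏ i + (ℏ / 2) • coroot E i ^ 2) := by
  rw [rootVecOne, sub_lie, smul_lie, g.lie_E_E.rootVec_true_lie_rootVec_false, rootVec_true,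
    rootVec_false, g.truncF_lie, kd_hi_hi, kd_lo_lo, ← neg_sub (ite (lo j < hi i) _ _),
    indicator_lo_sub_indicator_hi]
  by_cases hij : i = j
  · rw [← hij, corootOne, kdsl, if_pos rfl]
    linear_combination (norm := module) g.truncF_lo_lo_sub_truncF_hi_hi i
  · simp [kdsl, hij]

theorem truncF_lie_rootVec_true (g : IsYangianPair E F ℏ) (i j : Fin (n - 1)) :
    ⁅rootVec (truncF E F ℏ (hi i)) true i, rootVec E true j⁆ =
      kd (hi i) (lo j) • truncF E F ℏ (hi i) (lo i) (hi j) -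
        kd (lo i) (hi j) • truncF E F ℏ (hi i) (lo j) (hi i) +
        (ℏ * kdsl i j) • (rootVec E true i * rootVec E true j) := by
  rw [rootVec_true, rootVec_true, rootVec_true, g.truncF_lie, indicator_lo_sub_indicator_hi]
  by_cases hij : i = j
  · rw [hij]
  · simp only [kdsl, if_neg hij, mul_zero, zero_smul]

theorem rootVecOne_true_lie_sub (g : IsYangianPair E F ℏ) (i j : Fin (n - 1)) :
    ⁅rootVecOne E F ℏ true i, rootVec E true j⁆ - ⁅rootVec E true i, rootVecOne E F ℏ true j⁆ =
      (cartan i j * (ℏ / 2)) •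
        (rootVec E true i * rootVec E true j + rootVec E true j * rootVec E true i) := by
  have hbracket :
      ⁅rootVecOne E F ℏ true i, rootVec E true j⁆ - ⁅rootVec E true i, rootVecOne E F ℏ true j⁆ =
        ⁅rootVec (truncF E F ℏ (hi i)) true i, rootVec E true j⁆ +
        ⁅rootVec (truncF E F ℏ (hi j)) true j, rootVec E true i⁆ +
        (ℏ / 2) • (((j : ℂ) - i) • ⁅rootVec E true i, rootVec E true j⁆) := by
    rw [← lie_skew (rootVec E true i) (rootVecOne _ _ _ _ _), rootVecOne, rootVecOne]
    simp only [sub_lie, smul_lie]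
    rw [← lie_skew (rootVec E true i) (rootVec E true j)]
    module
  have hij := kd_smul_truncF_hi (E := E) (F := F) (ℏ := ℏ) i j
  have hji := kd_smul_truncF_hi (E := E) (F := F) (ℏ := ℏ) j i
  rw [hbracket, g.truncF_lie_rootVec_true, g.truncF_lie_rootVec_true,
    g.lie_E_E.sub_smul_rootVec_lie, Ring.lie_def, cartan_eq_kd, ← kd_lo_lo, ← kd_lo_lo, kd_hi_hi,
    ← kd_lo_lo, kd_comm (lo j) (lo i), kd_comm (lo j) (hi i), kd_comm (lo i) (hi j)]
  linear_combination (norm := module) -hij - hji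

end IsYangianPair

/-- The transposed family in the opposite algebra. It turns the relations of negative root vectors
into those of positive ones. -/
def opTranspose (G : Fin n → Fin n → B) : Fin n → Fin n → Bᵐᵒᵖ := fun i j ↦ MulOpposite.op (G j i)

theorem IsGLFamily.opTranspose (hE : IsGLFamily E) : IsGLFamily (opTranspose E) := by
  intro i j k l
  refine MulOpposite.unop_injective ?_
  rw [unop_lie]
  exact (hE l k j i).trans (by rw [kd_comm k j, kd_comm l i]; rfl)

theorem IsYangianPair.opTranspose (g : IsYangianPair E F ℏ) :
    IsYangianPair (opTranspose E) (opTranspose F) ℏ where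
  lie_E_E := g.lie_E_E.opTranspose
  lie_E_F i j k l := by
    refine MulOpposite.unop_injective ?_
    rw [unop_lie]
    exact (g.lie_F_E l k j i).trans (by rw [kd_comm k j, kd_comm l i]; rfl)
  lie_F_F i j := by
    have hswap : ⁅E i j, F j i⁆ = ⁅F i j, E j i⁆ := by rw [g.lie_E_F, g.lie_F_E]
    rw [Ring.lie_def, Ring.lie_def, sub_eq_sub_iff_sub_eq_sub] at hswap
    refine MulOpposite.unop_injective ?_
    rw [unop_lie]
    exact (g.lie_F_F j i).trans (by rw [hswap]; rfl)

theorem truncF_opTranspose (m : Fin n) :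
    truncF (opTranspose E) (opTranspose F) ℏ m = opTranspose (truncF E F ℏ m) := by
  ext i j
  refine MulOpposite.unop_injective ?_
  simp only [truncF, opTranspose, MulOpposite.unop_add, MulOpposite.unop_smul,
    Finset.unop_sum, MulOpposite.unop_mul, MulOpposite.unop_op]

theorem diagF_opTranspose (i : Fin n) :
    diagF (opTranspose E) (opTranspose F) ℏ i = MulOpposite.op (diagF E F ℏ i) := by
  rw [diagF, truncF_opTranspose]
  rfl

theorem corootOne_opTranspose (i : Fin (n - 1)) :
    corootOne (opTranspose E) (opTranspose F) ℏ i = MulOpposite.op (corootOne E F ℏ i) := by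
  rw [corootOne, diagF_opTranspose, diagF_opTranspose]
  rfl

theorem shiftedDiagF_opTranspose (i : Fin n) :
    shiftedDiagF (opTranspose E) (opTranspose F) ℏ i = MulOpposite.op (shiftedDiagF E F ℏ i) := by
  rw [shiftedDiagF, diagF_opTranspose]
  rfl

theorem rootVecOne_opTranspose (b : Bool) (i : Fin (n - 1)) :
    rootVecOne (opTranspose E) (opTranspose F) ℏ b i =
      MulOpposite.op (rootVecOne E F ℏ (!b) i) := by
  rw [rootVecOne, truncF_opTranspose]
  cases b <;> rfl

namespace IsYangianPair

theorem corootOne_lie_rootVec (g : IsYangianPair E F ℏ) (b : Bool) (i j : Fin (n - 1)) :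
    ⁅corootOne E F ℏ i, rootVec E b j⁆ = (sgn b * cartan i j) • rootVecOne E F ℏ b j := by
  cases b
  · have h := congrArg MulOpposite.unop (g.opTranspose.corootOne_lie_rootVec_true i j)
    rw [unop_lie, corootOne_opTranspose, rootVecOne_opTranspose] at h
    rw [← lie_skew, sgn, if_neg Bool.false_ne_true, neg_one_mul, neg_smul]
    exact congrArg Neg.neg h
  · rw [g.corootOne_lie_rootVec_true, sgn, if_pos rfl, one_mul]

theorem shiftedDiagF_lie_rootVec (g : IsYangianPair E F ℏ) (b : Bool) (i : Fin (n - 1)) :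
    ⁅shiftedDiagF E F ℏ (hi i), rootVec E b i⁆ = -sgn b • rootVecOne E F ℏ b i := by
  cases b
  · have h := congrArg MulOpposite.unop (g.opTranspose.shiftedDiagF_lie_rootVec_true i)
    rw [unop_lie, shiftedDiagF_opTranspose, rootVecOne_opTranspose] at h
    rw [← lie_skew, sgn, if_neg Bool.false_ne_true, neg_smul, neg_smul, one_smul]
    exact congrArg Neg.neg h
  · rw [g.shiftedDiagF_lie_rootVec_true, sgn, if_pos rfl, neg_smul, one_smul]

theorem rootVecOne_lie_sub (g : IsYangianPair E F ℏ) (b : Bool) (i j : Fin (n - 1)) :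
    ⁅rootVecOne E F ℏ b i, rootVec E b j⁆ - ⁅rootVec E b i, rootVecOne E F ℏ b j⁆ =
      (sgn b * cartan i j * (ℏ / 2)) •
        (rootVec E b i * rootVec E b j + rootVec E b j * rootVec E b i) := by
  cases b
  · have h := congrArg MulOpposite.unop (g.opTranspose.rootVecOne_true_lie_sub i j)
    rw [MulOpposite.unop_sub, unop_lie, unop_lie, rootVecOne_opTranspose,
      rootVecOne_opTranspose] at h
    rw [← lie_skew, ← lie_skew (rootVec E false i), ← neg_sub', sgn, if_neg Bool.false_ne_true,
      neg_one_mul, neg_mul, neg_smul, add_comm]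
    exact congrArg Neg.neg h
  · rw [g.rootVecOne_true_lie_sub, sgn, if_pos rfl, one_mul]

theorem rootVec_true_lie_rootVecOne_false (g : IsYangianPair E F ℏ) (i j : Fin (n - 1)) :
    ⁅rootVec E true i, rootVecOne E F ℏ false j⁆ =
      kdsl i j • (corootOne E F ℏ i + (ℏ / 2) • coroot E i ^ 2) := by
  have h := congrArg MulOpposite.unop (g.opTranspose.rootVecOne_true_lie_rootVec_false j i)
  rw [unop_lie, corootOne_opTranspose, rootVecOne_opTranspose, ← kd_lo_lo, kd_comm, kd_lo_lo] at h
  refine h.trans ?_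
  by_cases hij : i = j
  · rw [hij]; rfl
  · simp only [kdsl, if_neg hij, zero_smul, MulOpposite.unop_zero]

end IsYangianPair

end YangianPair

section Lift

variable {n : ℕ} {B : Type*} [Ring B] [Algebra ℂ B]

/-- The images in `B` of the generators of `y_ℏ(sl(n))` determined by the pair `(E, F)`, where `m`
is the last index. -/
def genImage (E F : Fin n → Fin n → B) (ℏ : ℂ) (m : Fin n) : SLAgen n → B
  | .Xp i r => if r = 0 then rootVec E true i else rootVecOne E F ℏ true i
  | .Xm i r => if r = 0 then rootVec E false i else rootVecOne E F ℏ false i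
  | .H i r => if r = 0 then coroot E i else corootOne E F ℏ i + (ℏ / 2) • coroot E i ^ 2
  | .A => shiftedDiagF E F ℏ m

/-- The homomorphism from the free algebra sending the generators to their `genImage`. -/
def freeLift (E F : Fin n → Fin n → B) (ℏ : ℂ) (m : Fin n) : FAsla n →ₐ[ℂ] B :=
  FreeAlgebra.lift ℂ (genImage E F ℏ m)

variable {E F : Fin n → Fin n → B} {ℏ : ℂ} {m : Fin n}

theorem freeLift_Xf_zero (b : Bool) (i : Fin (n - 1)) :
    freeLift E F ℏ m (Xf n b i 0) = rootVec E b i := by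
  cases b <;> exact FreeAlgebra.lift_ι_apply _ _

theorem freeLift_Xf_one (b : Bool) (i : Fin (n - 1)) :
    freeLift E F ℏ m (Xf n b i 1) = rootVecOne E F ℏ b i := by
  cases b <;> exact FreeAlgebra.lift_ι_apply _ _

theorem freeLift_Hf_zero (i : Fin (n - 1)) :
    freeLift E F ℏ m (Hf n i 0) = coroot E i :=
  FreeAlgebra.lift_ι_apply _ _

theorem freeLift_Hf_one (i : Fin (n - 1)) :
    freeLift E F ℏ m (Hf n i 1) =
      corootOne E F ℏ i + (ℏ / 2) • coroot E i ^ 2 :=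
  FreeAlgebra.lift_ι_apply _ _

theorem freeLift_Htf (i : Fin (n - 1)) :
    freeLift E F ℏ m (Htf n ℏ i) = corootOne E F ℏ i := by
  rw [Htf, map_sub, map_smul, map_pow, freeLift_Hf_zero, freeLift_Hf_one, add_sub_cancel_right]

theorem freeLift_Af : freeLift E F ℏ m (Af n) = shiftedDiagF E F ℏ m :=
  FreeAlgebra.lift_ι_apply _ _

theorem commute_freeLift_Hf (g : IsYangianPair E F ℏ) (i j : Fin (n - 1)) (r s : Fin 2) :
    Commute (freeLift E F ℏ m (Hf n i r))
      (freeLift E F ℏ m (Hf n j s)) := by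
  have h00 (i j : Fin (n - 1)) : Commute (coroot E i) (coroot E j) := g.lie_E_E.commute_coroot i j
  have h01 (i j : Fin (n - 1)) :
      Commute (coroot E i) (corootOne E F ℏ j + (ℏ / 2) • coroot E j ^ 2) :=
    (g.commute_coroot_corootOne i j).add_right (((h00 i j).pow_right 2).smul_right _)
  have h11 (i j : Fin (n - 1)) : Commute (corootOne E F ℏ i + (ℏ / 2) • coroot E i ^ 2)
      (corootOne E F ℏ j + (ℏ / 2) • coroot E j ^ 2) :=
    ((g.commute_corootOne i j).add_right
      (((g.commute_coroot_corootOne j i).symm.pow_right 2).smul_right _)).add_left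
      (((h01 i j).pow_left 2).smul_left _)
  revert r s
  simp only [Fin.forall_fin_two, freeLift_Hf_zero, freeLift_Hf_one]
  exact ⟨⟨h00 i j, h01 i j⟩, (h01 j i).symm, h11 i j⟩

theorem freeLift_eq_of_slaRel (g : IsYangianPair E F ℏ) (hm : (m : ℕ) + 1 = n) {x y : FAsla n}
    (h : slaRel n ℏ x y) :
    freeLift E F ℏ m x = freeLift E F ℏ m y := by
  cases h with
  | HHrel i j r s =>
    rw [map_ring_lie, map_zero]
    exact commute_iff_lie_eq.mp (commute_freeLift_Hf g i j r s)
  | XpXm00 i j =>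
    simpa only [map_ring_lie, map_smul, freeLift_Xf_zero, freeLift_Hf_zero] using
      g.lie_E_E.rootVec_true_lie_rootVec_false i j
  | XpXm10 i j =>
    simpa only [map_ring_lie, map_smul, freeLift_Xf_zero, freeLift_Xf_one, freeLift_Hf_one] using
      g.rootVecOne_true_lie_rootVec_false i j
  | XpXm01 i j =>
    simpa only [map_ring_lie, map_smul, freeLift_Xf_zero, freeLift_Xf_one, freeLift_Hf_one] using
      g.rootVec_true_lie_rootVecOne_false i j
  | H0X b i j r =>
    rw [map_ring_lie, map_smul, freeLift_Hf_zero]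
    match r with
    | 0 => rw [freeLift_Xf_zero]; exact coroot_lie_rootVec g.lie_E_E.diag_lie b i j
    | 1 => rw [freeLift_Xf_one]; exact g.coroot_lie_rootVecOne b i j
  | HtX b i j =>
    simpa only [map_ring_lie, map_smul, freeLift_Htf, freeLift_Xf_zero, freeLift_Xf_one] using
      g.corootOne_lie_rootVec b i j
  | XX b i j =>
    simpa only [map_ring_lie, map_smul, map_sub, map_add, map_mul, freeLift_Xf_zero,
      freeLift_Xf_one] using
      g.rootVecOne_lie_sub b i j
  | serre b i j hij =>
    simpa only [map_adn, map_zero, freeLift_Xf_zero] using g.lie_E_E.adn_serrePow_rootVec b hij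
  | HtA h =>
    rw [map_ring_lie, map_zero, freeLift_Htf, freeLift_Af]
    exact commute_iff_lie_eq.mp (g.commute_corootOne_shiftedDiagF _ m)
  | AX b h =>
    obtain rfl : m = hi ⟨n - 2, h⟩ := by
      simp only [hi, Fin.ext_iff]
      omega
    simpa only [map_ring_lie, map_smul, freeLift_Af, freeLift_Xf_zero, freeLift_Xf_one] using
      g.shiftedDiagF_lie_rootVec b ⟨n - 2, h⟩

theorem exists_iota_hat_general (g : IsYangianPair E F ℏ) (hm : (m : ℕ) + 1 = n) :
    ∃ φ : YSLA n ℏ →ₐ[ℂ] B,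
      (∀ i : Fin (n - 1),
        φ (slamk n ℏ (Xf n true i 0)) = E (lo i) (hi i) ∧
        φ (slamk n ℏ (Xf n false i 0)) = E (hi i) (lo i) ∧
        φ (slamk n ℏ (Hf n i 0)) = coroot E i ∧
        φ (slamk n ℏ (Hf n i 1)) = corootOne E F ℏ i + (ℏ / 2) • coroot E i ^ 2) ∧
      φ (slamk n ℏ (Af n)) = shiftedDiagF E F ℏ m := by
  refine ⟨RingQuot.liftAlgHom ℂ ⟨freeLift E F ℏ m,
    fun _ _ ↦ freeLift_eq_of_slaRel g hm⟩, fun i ↦ ?_, ?_⟩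
  · simp only [slamk, RingQuot.liftAlgHom_mkAlgHom_apply]
    exact ⟨freeLift_Xf_zero true i, freeLift_Xf_zero false i, freeLift_Hf_zero i, freeLift_Hf_one i⟩
  · rw [slamk, RingQuot.liftAlgHom_mkAlgHom_apply, freeLift_Af]

end Lift

section Evaluation

theorem sum_Iio_mk {M : Type*} [AddCommMonoid M] {n a : ℕ} (h : a < n) (f : Fin n → M) :
    ∑ u ∈ Finset.Iio ⟨a, h⟩, f u = ∑ u : Fin a, f ⟨u, u.isLt.trans h⟩ := by
  have hIio : Finset.Iio ⟨a, h⟩ = Finset.univ.map (Fin.castLEEmb h.le) := by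
    simp [← Finset.coe_inj, Set.ext_iff, Fin.lt_def]
  rw [hIio, Finset.sum_map]
  rfl

variable {n : ℕ} {ℏ : ℂ}

theorem isYangianPair_T : IsYangianPair (T n ℏ 1) (T n ℏ 2) ℏ where
  lie_E_E i j k l := by
    simpa only [Ring.lie_def, map_sub, map_mul, map_smul, map_neg, T] using
      RingQuot.mkAlgHom_rel ℂ (glRel.R1 (ℏ := ℏ) 1 i j k l)
  lie_E_F i j k l := by
    simpa only [Ring.lie_def, map_sub, map_mul, map_smul, map_neg, T] using
      RingQuot.mkAlgHom_rel ℂ (glRel.R1 (ℏ := ℏ) 2 i j k l)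
  lie_F_F i j := by
    simpa only [Ring.lie_def, map_sub, map_mul, map_smul, map_neg, T] using
      RingQuot.mkAlgHom_rel ℂ (glRel.R2 (ℏ := ℏ) i j)

theorem HH_eq_corootOne (i : Fin (n - 1)) (h : (i : ℕ) + 1 < n) :
    HH n ℏ i h = corootOne (T n ℏ 1) (T n ℏ 2) ℏ i := by
  simp only [HH, corootOne, diagF, truncF, coroot, lo, hi, sum_Iio_mk]
  module

theorem Agl_eq_shiftedDiagF (hn : 3 ≤ n) :
    Agl n ℏ hn = shiftedDiagF (T n ℏ 1) (T n ℏ 2) ℏ ⟨n - 1, by omega⟩ := by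
  rw [Agl, shiftedDiagF, diagF, truncF, sum_Iio_mk, Nat.cast_sub (by omega), Nat.cast_one]
  module

end Evaluation

/-- there exists a unital `ℂ`-algebra homomorphism
`ι̂ : y_ℏ(sl(n)) → y_ℏ(gl(n))` with `ι̂(X^+_{i,0}) = T^{(1)}_{i,i+1}`,
`ι̂(X^−_{i,0}) = T^{(1)}_{i+1,i}`, `ι̂(H_{i,0}) = T^{(1)}_{i,i} − T^{(1)}_{i+1,i+1}`,
`ι̂(H_{i,1}) = ℋ_i + (ℏ/2)(T^{(1)}_{i,i} − T^{(1)}_{i+1,i+1})²` for all `1 ≤ i ≤ n−1`, and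
`ι̂(A_{n,1}) = T^{(2)}_{n,n} − ((n−1)/2)ℏ·T^{(1)}_{n,n}
 + ℏ∑_{u=1}^{n−1} T^{(1)}_{n,u}T^{(1)}_{u,n} + (ℏ/2)(T^{(1)}_{n,n})²`. -/
theorem exists_iota_hat (n : ℕ) (hn : 3 ≤ n) (ℏ : ℂ) :
    ∃ φ : YSLA n ℏ →ₐ[ℂ] yGL n ℏ,
      (∀ i : Fin (n - 1),
        φ (slamk n ℏ (Xf n true i 0)) =
            T n ℏ 1 ⟨i.val, by have := i.isLt; omega⟩ ⟨i.val + 1, by have := i.isLt; omega⟩ ∧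
        φ (slamk n ℏ (Xf n false i 0)) =
            T n ℏ 1 ⟨i.val + 1, by have := i.isLt; omega⟩ ⟨i.val, by have := i.isLt; omega⟩ ∧
        φ (slamk n ℏ (Hf n i 0)) =
            T n ℏ 1 ⟨i.val, by have := i.isLt; omega⟩ ⟨i.val, by have := i.isLt; omega⟩ -
              T n ℏ 1 ⟨i.val + 1, by have := i.isLt; omega⟩ ⟨i.val + 1, by have := i.isLt; omega⟩ ∧
        φ (slamk n ℏ (Hf n i 1)) =
            HH n ℏ i.val (by have := i.isLt; omega) +
              (ℏ / 2) •
                (T n ℏ 1 ⟨i.val, by have := i.isLt; omega⟩ ⟨i.val, by have := i.isLt; omega⟩ -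
                  T n ℏ 1 ⟨i.val + 1, by have := i.isLt; omega⟩
                    ⟨i.val + 1, by have := i.isLt; omega⟩) ^ 2) ∧
      φ (slamk n ℏ (Af n)) = Agl n ℏ hn := by
  simp only [HH_eq_corootOne, Agl_eq_shiftedDiagF]
  exact exists_iota_hat_general isYangianPair_T (Nat.sub_add_cancel (by omega))

end
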